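/- Let X be a continuum, M ≺ H(κ) a countable elementary submodel with X ∈ M, L = 2^X ∩ M, K* ∈ M the lattice generated by the sets F* (F a finite family of closed subsets of X) representing C(X), and K = K* ∩ M. Then the Wallman space wK is homeomorphic to C(wL), the hyperspace of subcontinua of the metric continuum wL. -/

import Mathlib

open Set TopologicalSpace FirstOrder

universe u v

/-- An ultrafilter on a lattice `F` of subsets of `α` (in the Wallman sense): a proper filter
on `F` such that every member of `F` meeting all members of the filter belongs to it. -/
structure LUltra {α : Type u} (F : Set (Set α)) where
  sets : Set (Set α)
  sets_subset : sets ⊆ F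
  univ_mem : Set.univ ∈ sets
  empty_notMem : ∅ ∉ sets
  inter_mem : ∀ a ∈ sets, ∀ b ∈ sets, a ∩ b ∈ sets
  superset_mem : ∀ a ∈ sets, ∀ b ∈ F, a ⊆ b → b ∈ sets
  ultra : ∀ a ∈ F, a ∉ sets → ∃ b ∈ sets, a ∩ b = ∅

/-- The Wallman topology: the sets `â = {u : a ∈ u}`, `a ∈ F`, form a base for closed sets. -/
instance LUltra.instTopologicalSpace {α : Type u} (F : Set (Set α)) :
    TopologicalSpace (LUltra F) :=
  TopologicalSpace.generateFrom {s | ∃ a ∈ F, s = {u : LUltra F | a ∈ u.sets}ᶜ}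

/-- The hyperspace `C(X)` of subcontinua (nonempty closed connected subsets) of `X`. -/
def Subcontinua (X : Type u) [TopologicalSpace X] : Type u :=
  {A : Set X // IsClosed A ∧ IsConnected A}

/-- The Vietoris topology on the hyperspace of subcontinua. -/
instance Subcontinua.instTopologicalSpace (X : Type u) [TopologicalSpace X] :
    TopologicalSpace (Subcontinua X) :=
  TopologicalSpace.generateFrom
    ({s | ∃ U : Set X, IsOpen U ∧ s = {A : Subcontinua X | A.1 ⊆ U}} ∪
     {s | ∃ U : Set X, IsOpen U ∧ s = {A : Subcontinua X | (A.1 ∩ U).Nonempty}})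

/-- The basic closed set `F*` in `C(X)` determined by a finite family `F` of closed sets:
`F* = C(X) \ {G ∈ C(X) : G ∩ ⋂F = ∅ ∧ ∀ F ∈ F, ¬ G ⊆ F}`. -/
def starSet {X : Type u} [TopologicalSpace X] (F : Finset (Set X)) : Set (Subcontinua X) :=
  {G | ¬ ((G.1 ∩ ⋂₀ (↑F : Set (Set X))) = ∅ ∧ ∀ s ∈ F, ¬ G.1 ⊆ s)}

/-- The sublattice of subsets of `α` generated by a family `B` under finite unions and
finite intersections. -/
inductive LatGen {α : Type u} (B : Set (Set α)) : Set α → Prop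
  | base {s : Set α} : s ∈ B → LatGen B s
  | union {s t : Set α} : LatGen B s → LatGen B t → LatGen B (s ∪ t)
  | inter {s t : Set α} : LatGen B s → LatGen B t → LatGen B (s ∩ t)

/-- `x ∈ H(κ)`: `x` hereditarily has cardinality `< κ` (for regular `κ` this agrees with
`|TC(x)| < κ`). -/
def HeredLt (κ : Cardinal.{1}) (x : ZFSet.{0}) : Prop :=
  ZFSet.mem_wf.fix (fun x ih => Cardinal.mk x.toSet < κ ∧ ∀ y, ∀ h : y ∈ x, ih y h) x

/-- `ZFSet` as a structure for the language with one binary relation, interpreted as `∈`. -/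
instance ZFSet.memLangStructure : FirstOrder.Language.graph.Structure ZFSet.{0} where
  funMap := fun {_} f => isEmptyElim f
  RelMap := fun {_} r => match r with | .adj => fun x => x 0 ∈ x 1

/-- `H(κ)` as a substructure of the universe of sets with membership. -/
def HKappa (κ : Cardinal.{1}) : FirstOrder.Language.graph.Substructure ZFSet.{0} where
  carrier := {x | HeredLt κ x}
  fun_mem := fun {_} f => isEmptyElim f

/-- `z` belongs to the elementary submodel `M ≺ H(κ)`. -/
def MemOf (κ : Cardinal.{1})
    (M : FirstOrder.Language.graph.ElementarySubstructure (HKappa κ))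
    (z : ZFSet.{0}) : Prop :=
  ∃ h : z ∈ HKappa κ, (⟨z, h⟩ : HKappa κ) ∈ M

/-- The ZF-set coding a subset `A` of (the extension of) the ZF-set `X`. -/
noncomputable def codeSet (X : ZFSet.{0}) (A : Set ↥X.toSet) : ZFSet.{0} :=
  ZFSet.sep (fun y => ∃ h : y ∈ X.toSet, (⟨y, h⟩ : ↥X.toSet) ∈ A) X

/-- The subset of `X` decoded from a ZF-set `t`. -/
def decodeSet (X : ZFSet.{0}) (t : ZFSet.{0}) : Set ↥X.toSet :=
  {p : ↥X.toSet | (p : ZFSet) ∈ t}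

/-- The ZF-set coding the topology of the space `X`: the set of codes of open subsets. -/
noncomputable def opensZ (X : ZFSet.{0}) [TopologicalSpace ↥X.toSet] : ZFSet.{0} :=
  ZFSet.sep (fun t => IsOpen (decodeSet X t)) X.powerset

/-- The lattice `L = 2^X ∩ M`: the closed subsets of `X` whose codes belong to `M`. -/
def Lfam (X : ZFSet.{0}) [TopologicalSpace ↥X.toSet] (κ : Cardinal.{1})
    (M : FirstOrder.Language.graph.ElementarySubstructure (HKappa κ)) :
    Set (Set ↥X.toSet) :=
  {A | IsClosed A ∧ MemOf κ M (codeSet X A)}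

/-- The ZF-set coding a family `S` of subcontinua of `X` (each subcontinuum is coded as a
subset of `X`). -/
noncomputable def codeHypFam (X : ZFSet.{0}) [TopologicalSpace ↥X.toSet]
    (S : Set (Subcontinua ↥X.toSet)) : ZFSet.{0} :=
  ZFSet.sep (fun c => ∃ G : Subcontinua ↥X.toSet, G ∈ S ∧ c = codeSet X G.1) X.powerset

/-- The lattice `K*` representing `C(X)`: generated under finite unions and intersections
by the sets `F*` for finite families `F` of closed subsets of `X`. -/
def KStarLat (X : ZFSet.{0}) [TopologicalSpace ↥X.toSet] :
    Set (Set (Subcontinua ↥X.toSet)) :=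
  {S | LatGen
    {T | ∃ F : Finset (Set ↥X.toSet), (∀ s ∈ F, IsClosed s) ∧ T = starSet F} S}

/-- The ZF-set coding the lattice `K*`. -/
noncomputable def codeKStarLat (X : ZFSet.{0}) [TopologicalSpace ↥X.toSet] : ZFSet.{0} :=
  ZFSet.sep (fun d => ∃ S ∈ KStarLat X, d = codeHypFam X S) X.powerset.powerset

/-- The lattice `K = K* ∩ M`. -/
def Kfam (X : ZFSet.{0}) [TopologicalSpace ↥X.toSet] (κ : Cardinal.{1})
    (M : FirstOrder.Language.graph.ElementarySubstructure (HKappa κ)) :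
    Set (Set (Subcontinua ↥X.toSet)) :=
  {S | S ∈ KStarLat X ∧ MemOf κ M (codeHypFam X S)}

/-!
By elementarity, every Boolean relation holding pointwise between members of `L` and finitely many
further closed subsets of `X` still holds after replacing the latter by members of `L`. Hence `L` is
a normal lattice, and sending `x` to the ultrafilter of all `a ∈ L` that meet every member of `L`
containing `x` makes `wL` a compact Hausdorff quotient `q : X → wL`.

Every subcontinuum `H` of `wL` lifts to a subcontinuum `G` of `X` that lies inside, and meets, all
the members of `L` that `H` does; then `q(G) = H`. By compactness it suffices to respect finitely
many conditions `G ⊆ t` and `G ∩ c i ≠ ∅` at a time. If no component of `t` met all the `c i`,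
then `t` would split into finitely many disjoint closed pieces, each missing some `c i`; reflecting
the pieces into `L` would disconnect `H`. So `C(X) → C(wL)` is onto, and the lattice generated by
the sets `{G | G ⊆ a}` and `{G | G ∩ a ≠ ∅}` with `a ∈ L` is a base along this map whose disjoint
elements have disjoint images, which forces its Wallman space to be `C(wL)`.

Elementarity also identifies this lattice with `K`: an equation between a member of `K*` and a
lattice term in such sets, with one side given in `M`, can be solved for the other side in `M`.
-/

section Wallman

open scoped Topology

variable {α : Type*} {F : Set (Set α)}

namespace LUltra

/-- The basic closed set `â` of the Wallman space. -/
def hat (F : Set (Set α)) (a : Set α) : Set (LUltra F) := {u | a ∈ u.sets}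

variable {u v : LUltra F} {a b : Set α}

lemma isClosed_hat (ha : a ∈ F) : IsClosed (hat F a) :=
  ⟨isOpen_generateFrom_of_mem ⟨a, ha, rfl⟩⟩

lemma not_disjoint (ha : a ∈ u.sets) (hb : b ∈ u.sets) : ¬ Disjoint a b := fun h ↦
  u.empty_notMem (h.inter_eq ▸ u.inter_mem a ha b hb)

lemma exists_disjoint_of_notMem (ha : a ∈ F) (hau : a ∉ u.sets) : ∃ b ∈ u.sets, Disjoint a b := by
  simpa only [disjoint_iff_inter_eq_empty] using u.ultra a ha hau

lemma eq_of_sets_subset (h : u.sets ⊆ v.sets) : u = v := by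
  have h_eq : u.sets = v.sets := h.antisymm fun a hav ↦ by
    by_contra hau
    obtain ⟨b, hbu, hab⟩ := exists_disjoint_of_notMem (v.sets_subset hav) hau
    exact not_disjoint hav (h hbu) hab
  cases u; cases v; congr

lemma mem_or_mem_of_union_mem (ha : a ∈ F) (hb : b ∈ F) (hab : a ∪ b ∈ u.sets) :
    a ∈ u.sets ∨ b ∈ u.sets := by
  by_contra! h
  obtain ⟨a', ha', haa'⟩ := exists_disjoint_of_notMem ha h.1
  obtain ⟨b', hb', hbb'⟩ := exists_disjoint_of_notMem hb h.2
  exact not_disjoint hab (u.inter_mem a' ha' b' hb') (disjoint_union_left.mpr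
    ⟨haa'.mono_right inter_subset_left, hbb'.mono_right inter_subset_right⟩)

end LUltra

/-- A bounded sublattice of the power set of `α`. -/
structure IsSetLattice (L : Set (Set α)) : Prop where
  empty_mem : ∅ ∈ L
  univ_mem : univ ∈ L
  union_mem : ∀ a ∈ L, ∀ b ∈ L, a ∪ b ∈ L
  inter_mem : ∀ a ∈ L, ∀ b ∈ L, a ∩ b ∈ L

/-- A bounded lattice of sets in which disjoint elements are separated by the complements of two
elements covering everything; this makes its Wallman space Hausdorff. -/
structure IsNormalLattice (L : Set (Set α)) : Prop extends IsSetLattice L where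
  exists_cover : ∀ a ∈ L, ∀ b ∈ L, Disjoint a b →
    ∃ c ∈ L, ∃ d ∈ L, c ∪ d = univ ∧ Disjoint a c ∧ Disjoint b d

namespace IsNormalLattice

open LUltra

variable {L : Set (Set α)} {a : Set α} {x : α}

lemma t2Space (hL : IsNormalLattice L) : T2Space (LUltra L) where
  t2 u v huv := by
    obtain ⟨a, hau, hav⟩ := not_subset.mp (mt eq_of_sets_subset huv)
    obtain ⟨b, hbv, hab⟩ := exists_disjoint_of_notMem (u.sets_subset hau) hav
    obtain ⟨c, hc, d, hd, hcd, hac, hbd⟩ :=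
      hL.exists_cover a (u.sets_subset hau) b (v.sets_subset hbv) hab
    refine ⟨(hat L c)ᶜ, (hat L d)ᶜ, (isClosed_hat hc).isOpen_compl, (isClosed_hat hd).isOpen_compl,
      fun hcu ↦ not_disjoint hau hcu hac, fun hdv ↦ not_disjoint hbv hdv hbd, ?_⟩
    rw [disjoint_compl_left_iff_subset]
    intro w hdw
    exact (mem_or_mem_of_union_mem hc hd (hcd ▸ w.univ_mem)).resolve_right hdw

/-- The canonical map `α → wL`: the point `x` goes to the ultrafilter of all `a ∈ L` that meet
every element of `L` containing `x`. -/
def toWallman (hL : IsNormalLattice L) (x : α) : LUltra L where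
  sets := {a ∈ L | ∀ b ∈ L, Disjoint a b → x ∉ b}
  sets_subset := sep_subset _ _
  univ_mem := ⟨hL.univ_mem, fun b _ h hx ↦ h.notMem_of_mem_left (mem_univ x) hx⟩
  empty_notMem h := h.2 univ hL.univ_mem (empty_disjoint _) (mem_univ x)
  superset_mem a ha b hb hab := ⟨hb, fun c hc hbc ↦ ha.2 c hc (hbc.mono_left hab)⟩
  ultra a ha hax := by
    simp only [mem_ofPred_eq, not_and, not_forall, not_not] at hax
    obtain ⟨b, hb, hab, hxb⟩ := hax ha
    exact ⟨b, ⟨hb, fun c _ hbc ↦ hbc.notMem_of_mem_left hxb⟩, hab.inter_eq⟩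
  inter_mem a ha b hb := by
    refine ⟨hL.inter_mem a ha.1 b hb.1, fun c hc hab_c hxc ↦ ?_⟩
    obtain ⟨d, hd, e, he, hde, had, hbce⟩ := hL.exists_cover a ha.1 (b ∩ c)
      (hL.inter_mem b hb.1 c hc) (by rwa [disjoint_iff_inter_eq_empty, ← inter_assoc,
        ← disjoint_iff_inter_eq_empty])
    have hxe : x ∈ e := (hde ▸ mem_univ x : x ∈ d ∪ e).resolve_left (ha.2 d hd had)
    refine hb.2 (c ∩ e) (hL.inter_mem c hc e he) ?_ ⟨hxc, hxe⟩
    rwa [disjoint_iff_inter_eq_empty, ← inter_assoc, ← disjoint_iff_inter_eq_empty]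

lemma mem_toWallman_of_mem (hL : IsNormalLattice L) (ha : a ∈ L) (hx : x ∈ a) :
    a ∈ (hL.toWallman x).sets :=
  ⟨ha, fun _ _ hab ↦ hab.notMem_of_mem_left hx⟩

end IsNormalLattice

end Wallman

section BaseAlong

open LUltra

variable {Y Z : Type*} [tY : TopologicalSpace Y] {f : Z → Y} {K : Set (Set Z)}

/-- `K` interpolates between the preimages under `f` of a compact set and of an open
neighbourhood of it. For a lattice `K` of closed sets this says that `K` induces a closed base
of `Y` along `f`. -/
def IsBaseAlong (f : Z → Y) (K : Set (Set Z)) : Prop :=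
  ∀ C U : Set Y, IsCompact C → IsOpen U → C ⊆ U →
    ∃ A ∈ K, ∃ W, IsOpen W ∧ C ⊆ W ∧ f ⁻¹' W ⊆ A ∧ A ⊆ f ⁻¹' U

lemma IsSetLattice.isBaseAlong_of_generateFrom (hK : IsSetLattice K) {g : Set (Set Y)}
    (hg : tY = generateFrom g)
    (h : ∀ s ∈ g, ∀ y ∈ s, ∃ A ∈ K, ∃ W, IsOpen W ∧ y ∈ W ∧ f ⁻¹' W ⊆ A ∧ A ⊆ f ⁻¹' s) :
    IsBaseAlong f K := by
  have h_local (U : Set Y) (hU : IsOpen U) : ∀ y ∈ U,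
      ∃ A ∈ K, ∃ W, IsOpen W ∧ y ∈ W ∧ f ⁻¹' W ⊆ A ∧ A ⊆ f ⁻¹' U := by
    rw [hg] at hU
    induction hU with
    | basic s hs => exact h s hs
    | univ => exact fun y _ ↦ ⟨univ, hK.univ_mem, univ, isOpen_univ, mem_univ y,
        subset_univ _, subset_univ _⟩
    | inter s t _ _ ihs iht =>
      rintro y ⟨hys, hyt⟩
      obtain ⟨A, hA, V, hV, hyV, hVA, hAs⟩ := ihs y hys
      obtain ⟨B, hB, W, hW, hyW, hWB, hBt⟩ := iht y hyt
      exact ⟨A ∩ B, hK.inter_mem A hA B hB, V ∩ W, hV.inter hW, ⟨hyV, hyW⟩,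
        inter_subset_inter hVA hWB, inter_subset_inter hAs hBt⟩
    | sUnion S _ ih =>
      rintro y ⟨s, hs, hys⟩
      obtain ⟨A, hA, W, hW, hyW, hWA, hAs⟩ := ih s hs y hys
      exact ⟨A, hA, W, hW, hyW, hWA, hAs.trans (preimage_mono (subset_sUnion_of_mem hs))⟩
  intro C U hC hU hCU
  refine hC.induction_on (p := fun C ↦
    ∃ A ∈ K, ∃ W, IsOpen W ∧ C ⊆ W ∧ f ⁻¹' W ⊆ A ∧ A ⊆ f ⁻¹' U) ?_ ?_ ?_ ?_
  · exact ⟨∅, hK.empty_mem, ∅, isOpen_empty, subset_rfl, subset_rfl, empty_subset _⟩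
  · rintro C D hCD ⟨A, hA, W, hW, hDW, hWAU⟩
    exact ⟨A, hA, W, hW, hCD.trans hDW, hWAU⟩
  · rintro C D ⟨A, hA, V, hV, hCV, hVA, hAU⟩ ⟨B, hB, W, hW, hDW, hWB, hBU⟩
    exact ⟨A ∪ B, hK.union_mem A hA B hB, V ∪ W, hV.union hW, union_subset_union hCV hDW,
      union_subset_union hVA hWB, union_subset hAU hBU⟩
  · intro y hy
    obtain ⟨A, hA, W, hW, hyW, hWAU⟩ := h_local U hU y (hCU hy)
    exact ⟨W, mem_nhdsWithin_of_mem_nhds (hW.mem_nhds hyW), A, hA, W, hW, subset_rfl, hWAU⟩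

lemma IsNormalLattice.isBaseAlong_toWallman {L : Set (Set Z)} (hL : IsNormalLattice L) :
    IsBaseAlong hL.toWallman L := by
  refine hL.toIsSetLattice.isBaseAlong_of_generateFrom rfl ?_
  rintro _ ⟨a, ha, rfl⟩ u (hau : a ∉ u.sets)
  obtain ⟨b, hbu, hab⟩ := exists_disjoint_of_notMem ha hau
  obtain ⟨c, hc, d, hd, hcd, hac, hbd⟩ := hL.exists_cover a ha b (u.sets_subset hbu) hab
  refine ⟨c, hc, (hat L d)ᶜ, (isClosed_hat hd).isOpen_compl,
    fun hdu ↦ not_disjoint hbu hdu hbd, fun x hxd ↦ ?_, fun x hxc hax ↦ ?_⟩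
  · exact (hcd ▸ mem_univ x : x ∈ c ∪ d).resolve_right
      fun hx ↦ hxd (hL.mem_toWallman_of_mem hd hx)
  · exact not_disjoint hax (hL.mem_toWallman_of_mem hc hxc) hac

end BaseAlong

section CompactWallman

variable {X : Type*} [TopologicalSpace X] {L : Set (Set X)}

namespace IsNormalLattice

open LUltra

lemma continuous_toWallman (hL : IsNormalLattice L) (hcl : ∀ a ∈ L, IsClosed a) :
    Continuous hL.toWallman := by
  refine continuous_generateFrom_iff.mpr ?_
  rintro _ ⟨a, ha, rfl⟩
  refine isOpen_iff_mem_nhds.mpr fun x (hax : a ∉ (hL.toWallman x).sets) ↦ ?_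
  obtain ⟨b, hbx, hab⟩ := exists_disjoint_of_notMem ha hax
  obtain ⟨c, hc, d, hd, hcd, hac, hbd⟩ :=
    hL.exists_cover a ha b ((hL.toWallman x).sets_subset hbx) hab
  have hxd : x ∉ d := fun hx ↦ not_disjoint hbx (hL.mem_toWallman_of_mem hd hx) hbd
  refine Filter.mem_of_superset ((hcl d hd).isOpen_compl.mem_nhds hxd) fun y hyd hay ↦ ?_
  have hyc : y ∈ c := (hcd ▸ mem_univ y : y ∈ c ∪ d).resolve_right hyd
  exact not_disjoint hay (hL.mem_toWallman_of_mem hc hyc) hac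

lemma image_toWallman [CompactSpace X] (hL : IsNormalLattice L) (hcl : ∀ a ∈ L, IsClosed a)
    {a : Set X} (ha : a ∈ L) : hL.toWallman '' a = hat L a := by
  refine subset_antisymm (image_subset_iff.mpr fun x ↦ hL.mem_toWallman_of_mem ha) fun u hau ↦ ?_
  obtain ⟨x, hx⟩ : (⋂₀ u.sets).Nonempty := by
    have hcl_u : ∀ b ∈ u.sets, IsClosed b := fun b hb ↦ hcl b (u.sets_subset hb)
    have : Nonempty u.sets := ⟨⟨univ, u.univ_mem⟩⟩
    refine IsCompact.nonempty_sInter_of_directed_nonempty_isCompact_isClosed ?_ ?_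
      (fun b hb ↦ (hcl_u b hb).isCompact) hcl_u
    · exact fun b hb c hc ↦ ⟨b ∩ c, u.inter_mem b hb c hc, inter_subset_left, inter_subset_right⟩
    · exact fun b hb ↦ nonempty_iff_ne_empty.mpr fun h ↦ u.empty_notMem (h ▸ hb)
  refine ⟨x, hx a hau, (eq_of_sets_subset fun b hbu ↦ ?_).symm⟩
  exact hL.mem_toWallman_of_mem (u.sets_subset hbu) (hx b hbu)

lemma toWallman_surjective [CompactSpace X] (hL : IsNormalLattice L)
    (hcl : ∀ a ∈ L, IsClosed a) : Function.Surjective hL.toWallman := by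
  rw [← range_eq_univ, ← image_univ, hL.image_toWallman hcl hL.univ_mem]
  exact eq_univ_of_forall fun u ↦ u.univ_mem

lemma compactSpace [CompactSpace X] (hL : IsNormalLattice L) (hcl : ∀ a ∈ L, IsClosed a) :
    CompactSpace (LUltra L) :=
  (hL.toWallman_surjective hcl).compactSpace (hL.continuous_toWallman hcl)

end IsNormalLattice

section Recognition

open LUltra Topology

variable [CompactSpace X] {Y : Type*} [TopologicalSpace Y] [T2Space Y] {f : X → Y}

lemma IsBaseAlong.isNormalLattice [CompactSpace Y] (hbase : IsBaseAlong f L) (hf : Continuous f)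
    (hL : IsSetLattice L) (hcl : ∀ a ∈ L, IsClosed a)
    (hdisj : ∀ a ∈ L, ∀ b ∈ L, Disjoint a b → Disjoint (f '' a) (f '' b)) :
    IsNormalLattice L where
  toIsSetLattice := hL
  exists_cover a ha b hb hab := by
    have ha' : IsCompact (f '' a) := (hcl a ha).isCompact.image hf
    have hb' : IsCompact (f '' b) := (hcl b hb).isCompact.image hf
    obtain ⟨U, V, hU, hV, haU, hbV, hUV⟩ := SeparatedNhds.of_isCompact_isCompact ha' hb'
      (hdisj a ha b hb hab)
    obtain ⟨c, hc, C, -, hUC, hCc, hca⟩ := hbase Uᶜ (f '' a)ᶜ hU.isClosed_compl.isCompact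
      ha'.isClosed.isOpen_compl (compl_subset_compl.mpr haU)
    obtain ⟨d, hd, D, -, hVD, hDd, hdb⟩ := hbase Vᶜ (f '' b)ᶜ hV.isClosed_compl.isCompact
      hb'.isClosed.isOpen_compl (compl_subset_compl.mpr hbV)
    refine ⟨c, hc, d, hd, eq_univ_of_forall fun x ↦ ?_,
      disjoint_left.mpr fun x hxa hxc ↦ hca hxc (mem_image_of_mem f hxa),
      disjoint_left.mpr fun x hxb hxd ↦ hdb hxd (mem_image_of_mem f hxb)⟩
    by_cases hxU : f x ∈ U
    · exact .inr (hDd (hVD (hUV.notMem_of_mem_left hxU)))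
    · exact .inl (hCc (hUC hxU))

lemma IsBaseAlong.mem_toWallman_iff (hbase : IsBaseAlong f L) (hf : Continuous f)
    (hL : IsNormalLattice L) (hcl : ∀ a ∈ L, IsClosed a)
    (hdisj : ∀ a ∈ L, ∀ b ∈ L, Disjoint a b → Disjoint (f '' a) (f '' b))
    {a : Set X} (ha : a ∈ L) {x : X} : a ∈ (hL.toWallman x).sets ↔ f x ∈ f '' a := by
  refine ⟨fun hax ↦ ?_, fun hx ↦ ⟨ha, fun b hb hab hxb ↦ ?_⟩⟩
  · by_contra hx
    obtain ⟨A, hA, W, -, hxW, hWA, hAa⟩ := hbase {f x} (f '' a)ᶜ isCompact_singleton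
      ((hcl a ha).isCompact.image hf).isClosed.isOpen_compl (by simpa using hx)
    refine hax.2 A hA ?_ (hWA (hxW rfl))
    exact disjoint_left.mpr fun z hza hzA ↦ hAa hzA (mem_image_of_mem f hza)
  · exact (hdisj a ha b hb hab).notMem_of_mem_left hx (mem_image_of_mem f hxb)

lemma IsBaseAlong.toWallman_eq_iff (hbase : IsBaseAlong f L) (hf : Continuous f)
    (hL : IsNormalLattice L) (hcl : ∀ a ∈ L, IsClosed a)
    (hdisj : ∀ a ∈ L, ∀ b ∈ L, Disjoint a b → Disjoint (f '' a) (f '' b)) {x y : X} :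
    hL.toWallman x = hL.toWallman y ↔ f x = f y := by
  refine ⟨fun hxy ↦ ?_, fun hxy ↦ eq_of_sets_subset fun a hax ↦ ?_⟩
  · by_contra hne
    obtain ⟨A, hA, W, -, hxW, hWA, hAy⟩ :=
      hbase {f x} {f y}ᶜ isCompact_singleton isOpen_compl_singleton
        (singleton_subset_iff.mpr hne)
    have hAx : A ∈ (hL.toWallman x).sets := hL.mem_toWallman_of_mem hA (hWA (hxW rfl))
    rw [hxy, hbase.mem_toWallman_iff hf hL hcl hdisj hA] at hAx
    obtain ⟨z, hzA, hzy⟩ := hAx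
    exact hAy hzA hzy
  · have ha := (hL.toWallman x).sets_subset hax
    rwa [hbase.mem_toWallman_iff hf hL hcl hdisj ha, ← hxy,
      ← hbase.mem_toWallman_iff hf hL hcl hdisj ha]

theorem IsBaseAlong.nonempty_wallman_homeomorph (hbase : IsBaseAlong f L) (hf : Continuous f)
    (hf_surj : Function.Surjective f) (hL : IsSetLattice L) (hcl : ∀ a ∈ L, IsClosed a)
    (hdisj : ∀ a ∈ L, ∀ b ∈ L, Disjoint a b → Disjoint (f '' a) (f '' b)) :
    Nonempty (LUltra L ≃ₜ Y) := by
  have := hf_surj.compactSpace hf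
  have hN := hbase.isNormalLattice hf hL hcl hdisj
  have := hN.t2Space
  let q : C(X, LUltra L) := ⟨hN.toWallman, hN.continuous_toWallman hcl⟩
  let p : C(X, Y) := ⟨f, hf⟩
  have hq : IsQuotientMap q := .of_surjective_continuous (hN.toWallman_surjective hcl) q.continuous
  have hp : IsQuotientMap p := .of_surjective_continuous hf_surj p.continuous
  have hker : Setoid.ker q = Setoid.ker p :=
    Setoid.ext fun _ _ ↦ hbase.toWallman_eq_iff hf hN hcl hdisj
  exact ⟨(hker ▸ hq.homeomorph).symm.trans hp.homeomorph⟩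

end Recognition

end CompactWallman

section Hyperspace

open Topology

variable {X Y : Type*} [TopologicalSpace X] [TopologicalSpace Y]

lemma isClosed_setOf_isPreconnected [T2Space X] :
    IsClosed {K : Compacts X | IsPreconnected (K : Set X)} := by
  rw [← isOpen_compl_iff, isOpen_iff_forall_mem_open]
  intro K hK
  rw [mem_compl_iff, mem_ofPred_eq,
    isPreconnected_iff_subset_of_fully_disjoint_closed K.isCompact.isClosed] at hK
  push Not at hK
  obtain ⟨a, b, ha, hb, hKab, hab, hKa, hKb⟩ := hK
  obtain ⟨U, V, hU, hV, haU, hbV, hUV⟩ := SeparatedNhds.of_isCompact_isCompact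
    (K.isCompact.inter_right ha) (K.isCompact.inter_right hb)
    (hab.mono inter_subset_right inter_subset_right)
  have hKU : ((K : Set X) ∩ U).Nonempty := by
    obtain ⟨x, hxK, hxb⟩ := not_subset.mp hKb
    exact ⟨x, hxK, haU ⟨hxK, (hKab hxK).resolve_right hxb⟩⟩
  have hKV : ((K : Set X) ∩ V).Nonempty := by
    obtain ⟨x, hxK, hxa⟩ := not_subset.mp hKa
    exact ⟨x, hxK, hbV ⟨hxK, (hKab hxK).resolve_left hxa⟩⟩
  refine ⟨{C : Compacts X | (C : Set X) ⊆ U ∪ V} ∩ ({C : Compacts X | ((C : Set X) ∩ U).Nonempty} ∩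
      {C : Compacts X | ((C : Set X) ∩ V).Nonempty}), ?_,
    (Compacts.isOpen_subsets_of_isOpen (hU.union hV)).inter
      ((Compacts.isOpen_inter_nonempty_of_isOpen hU).inter
        (Compacts.isOpen_inter_nonempty_of_isOpen hV)),
    fun x hx ↦ (hKab hx).imp (haU ⟨hx, ·⟩) (hbV ⟨hx, ·⟩), hKU, hKV⟩
  rintro C ⟨hCUV, hCU, hCV⟩ hC
  obtain ⟨x, -, hxU, hxV⟩ := hC U V hU hV hCUV hCU hCV
  exact hUV.notMem_of_mem_left hxU hxV

namespace Subcontinua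

/-- The subcontinua contained in `a`. -/
def inside (a : Set X) : Set (Subcontinua X) := {G | G.1 ⊆ a}

/-- The subcontinua meeting `a`. -/
def hit (a : Set X) : Set (Subcontinua X) := {G | (G.1 ∩ a).Nonempty}

lemma isOpen_inside {U : Set X} (hU : IsOpen U) : IsOpen (inside U) :=
  isOpen_generateFrom_of_mem (.inl ⟨U, hU, rfl⟩)

lemma isOpen_hit {U : Set X} (hU : IsOpen U) : IsOpen (hit U) :=
  isOpen_generateFrom_of_mem (.inr ⟨U, hU, rfl⟩)

lemma compl_inside (a : Set X) : (inside a)ᶜ = hit aᶜ :=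
  ext fun _ ↦ inter_compl_nonempty_iff.symm

lemma isClosed_inside {a : Set X} (ha : IsClosed a) : IsClosed (inside a) :=
  ⟨compl_inside a ▸ isOpen_hit ha.isOpen_compl⟩

lemma isClosed_hit {a : Set X} (ha : IsClosed a) : IsClosed (hit a) := by
  rw [← compl_compl a, ← compl_inside]
  exact (isOpen_inside ha.isOpen_compl).isClosed_compl

/-- A subcontinuum of a compact space as a compact set. -/
def toCompacts [CompactSpace X] (G : Subcontinua X) : Compacts X := ⟨G.1, G.2.1.isCompact⟩

lemma isEmbedding_toCompacts [CompactSpace X] :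
    IsEmbedding (toCompacts : Subcontinua X → Compacts X) where
  injective _ _ h := Subtype.ext (congrArg SetLike.coe h)
  eq_induced := by
    refine le_antisymm ?_ ?_
    · refine continuous_iff_le_induced.mp (continuous_induced_rng.mpr ?_)
      refine continuous_generateFrom_iff.mpr ?_
      rintro _ (⟨U, hU, rfl⟩ | ⟨U, hU, rfl⟩)
      exacts [isOpen_inside hU, isOpen_hit hU]
    · refine le_generateFrom ?_
      rintro _ (⟨U, hU, rfl⟩ | ⟨U, hU, rfl⟩)
      exacts [⟨_, Compacts.isOpen_subsets_of_isOpen hU, rfl⟩,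
        ⟨_, Compacts.isOpen_inter_nonempty_of_isOpen hU, rfl⟩]

instance [CompactSpace X] [T2Space X] : T2Space (Subcontinua X) :=
  isEmbedding_toCompacts.t2Space

lemma isClosedEmbedding_toCompacts [CompactSpace X] [T2Space X] :
    IsClosedEmbedding (toCompacts : Subcontinua X → Compacts X) where
  toIsEmbedding := isEmbedding_toCompacts
  isClosed_range := by
    have h_range : range (toCompacts : Subcontinua X → Compacts X) =
        {K : Compacts X | (K : Set X).Nonempty} ∩
          {K : Compacts X | IsPreconnected (K : Set X)} := by
      ext K
      refine ⟨?_, fun hK ↦ ⟨⟨K, K.isCompact.isClosed, hK⟩, rfl⟩⟩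
      rintro ⟨G, rfl⟩
      exact G.2.2
    rw [h_range]
    refine IsClosed.inter ?_ isClosed_setOf_isPreconnected
    simpa using Compacts.isClosed_inter_nonempty_of_isClosed (isClosed_univ (X := X))

instance [CompactSpace X] [T2Space X] : CompactSpace (Subcontinua X) :=
  isClosedEmbedding_toCompacts.compactSpace

/-- The image of a subcontinuum under a continuous map. -/
def map [CompactSpace X] [T2Space Y] (f : C(X, Y)) (G : Subcontinua X) : Subcontinua Y :=
  ⟨f '' G.1, (G.2.1.isCompact.image f.continuous).isClosed, G.2.2.image f f.continuous.continuousOn⟩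

lemma continuous_map [CompactSpace X] [T2Space Y] (f : C(X, Y)) : Continuous (map f) := by
  refine continuous_generateFrom_iff.mpr ?_
  rintro _ (⟨U, hU, rfl⟩ | ⟨U, hU, rfl⟩)
  · have h_pre : map f ⁻¹' {A | A.1 ⊆ U} = inside (f ⁻¹' U) := ext fun _ ↦ image_subset_iff
    rw [h_pre]
    exact isOpen_inside (hU.preimage f.continuous)
  · have h_pre : map f ⁻¹' {A | (A.1 ∩ U).Nonempty} = hit (f ⁻¹' U) :=
      ext fun _ ↦ image_inter_nonempty_iff
    rw [h_pre]
    exact isOpen_hit (hU.preimage f.continuous)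

end Subcontinua

end Hyperspace

section Components

open Function Topology

variable {X : Type*} [TopologicalSpace X]

lemma exists_closed_partition_of_connectedComponent [CompactSpace X] [T2Space X] {ι : Type*}
    {c : ι → Set X} (hc : ∀ i, IsClosed (c i))
    (h : ∀ x, ∃ i, Disjoint (connectedComponent x) (c i)) :
    ∃ (n : ℕ) (V : Fin n → Set X), (∀ j, IsClosed (V j)) ∧ ⋃ j, V j = univ ∧
      Pairwise (Disjoint on V) ∧ ∀ j, ∃ i, Disjoint (V j) (c i) := by
  let π : X → ConnectedComponents X := (↑)
  have h_closed (i : ι) : IsClosed (π '' c i) :=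
    ((hc i).isCompact.image ConnectedComponents.continuous_coe).isClosed
  have h_cover : ⋃ i, (π '' c i)ᶜ = univ := by
    refine eq_univ_of_forall (ConnectedComponents.surjective_coe.forall.mpr fun x ↦ ?_)
    obtain ⟨i, hi⟩ := h x
    refine mem_iUnion.mpr ⟨i, ?_⟩
    rintro ⟨z, hzc, hzx⟩
    exact hi.notMem_of_mem_left (ConnectedComponents.coe_eq_coe'.mp hzx) hzc
  obtain ⟨n, V, hVc, hV_univ, hV_disj⟩ := (IsOpenCover.of_sets
    (fun i ↦ (h_closed i).isOpen_compl) h_cover).exists_finite_nonempty_disjoint_clopen_cover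
  refine ⟨n, fun j ↦ π ⁻¹' V j,
    fun j ↦ (V j).isClopen.isClosed.preimage ConnectedComponents.continuous_coe, ?_,
    fun j k hjk ↦ (Clopens.coe_disjoint.mpr (hV_disj hjk)).preimage π, fun j ↦ ?_⟩
  · rw [← preimage_iUnion, univ_subset_iff.mp hV_univ, preimage_univ]
  · obtain ⟨i, hi⟩ := (hVc j).2
    exact ⟨i, disjoint_left.mpr fun x hxV hxc ↦ hi hxV (mem_image_of_mem π hxc)⟩

lemma exists_subcontinuum_or_closed_partition [CompactSpace X] [T2Space X] {t : Set X}
    (ht : IsClosed t) {ι : Type*} {c : ι → Set X} (hc : ∀ i, IsClosed (c i)) :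
    (∃ G : Subcontinua X, G.1 ⊆ t ∧ ∀ i, (G.1 ∩ c i).Nonempty) ∨
      ∃ (n : ℕ) (V : Fin n → Set X), (∀ j, IsClosed (V j)) ∧ ⋃ j, V j = t ∧
        Pairwise (Disjoint on V) ∧ ∀ j, ∃ i, Disjoint (V j) (c i) := by
  have := isCompact_iff_compactSpace.mp ht.isCompact
  refine or_iff_not_imp_left.mpr fun hG ↦ ?_
  obtain ⟨n, V, hV, hVt, hV_disj, hVc⟩ := exists_closed_partition_of_connectedComponent
    (X := t) (c := fun i ↦ (↑) ⁻¹' c i) (fun i ↦ (hc i).preimage continuous_subtype_val) fun x ↦ by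
      by_contra! hx
      refine hG ⟨⟨(↑) '' connectedComponent x,
        ht.isClosedMap_subtype_val _ isClosed_connectedComponent,
        isConnected_connectedComponent.image _ continuous_subtype_val.continuousOn⟩,
        Subtype.coe_image_subset _ _, fun i ↦ ?_⟩
      rw [image_inter_nonempty_iff]
      exact not_disjoint_iff_nonempty_inter.mp (hx i)
  refine ⟨n, fun j ↦ (↑) '' V j, fun j ↦ ht.isClosedMap_subtype_val _ (hV j), ?_,
    fun j k hjk ↦ (disjoint_image_iff Subtype.val_injective).mpr (hV_disj hjk), fun j ↦ ?_⟩
  · rw [← image_iUnion, hVt, image_univ, Subtype.range_coe]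
  · obtain ⟨i, hi⟩ := hVc j
    exact ⟨i, disjoint_image_left.mpr hi⟩

lemma exists_subset_of_isPreconnected_of_subset_iUnion {H : Set X} (hH : IsPreconnected H)
    (hne : H.Nonempty) {ι : Type*} [Finite ι] {V : ι → Set X} (hV : ∀ j, IsClosed (V j))
    (hHV : H ⊆ ⋃ j, V j) (hV_disj : Pairwise (Disjoint on V)) : ∃ j, H ⊆ V j := by
  obtain ⟨x, hx⟩ := hne
  obtain ⟨j, hxj⟩ := mem_iUnion.mp (hHV hx)
  have h_rest : IsClosed (⋃ k : {k // k ≠ j}, V k) := isClosed_iUnion_of_finite fun k ↦ hV k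
  have h_disj : Disjoint (V j) (⋃ k : {k // k ≠ j}, V k) :=
    disjoint_iUnion_right.mpr fun k ↦ hV_disj k.2.symm
  refine ⟨j, (isPreconnected_iff_subset_of_disjoint_closed.mp hH _ _ (hV j) h_rest
    (fun y hy ↦ ?_) (by rw [h_disj.inter_eq, inter_empty])).resolve_right
      fun h ↦ h_disj.notMem_of_mem_left hxj (h hx)⟩
  obtain ⟨k, hyk⟩ := mem_iUnion.mp (hHV hy)
  by_cases hkj : k = j
  · exact .inl (hkj ▸ hyk)
  · exact .inr (mem_iUnion.mpr ⟨⟨k, hkj⟩, hyk⟩)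

end Components

section Reflecting

open Function LUltra

variable {X : Type*} [TopologicalSpace X] {L : Set (Set X)}

/-- A family `L` of closed sets such that every pointwise Boolean relation between finitely many
members of `L` and finitely many closed sets can be realised with members of `L` in place of the
latter. This is the part of the elementarity of `L = 2^X ∩ M` used in the topological argument. -/
structure IsReflecting (L : Set (Set X)) : Prop where
  isClosed : ∀ a ∈ L, IsClosed a
  exists_mem : ∀ {α β : Type} [Finite α] [Finite β] (ψ : (α → Prop) → (β → Prop) → Prop)
    {A : α → Set X} {B : β → Set X}, (∀ i, A i ∈ L) → (∀ j, IsClosed (B j)) →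
    (∀ x, ψ (x ∈ A ·) (x ∈ B ·)) → ∃ B' : β → Set X, (∀ j, B' j ∈ L) ∧ ∀ x, ψ (x ∈ A ·) (x ∈ B' ·)

namespace IsReflecting

lemma mem_of_forall_mem_iff (hL : IsReflecting L) {α : Type} [Finite α] (φ : (α → Prop) → Prop)
    {A : α → Set X} (hA : ∀ i, A i ∈ L) {b : Set X} (hb : IsClosed b)
    (h : ∀ x, x ∈ b ↔ φ (x ∈ A ·)) : b ∈ L := by
  obtain ⟨B, hB, hBφ⟩ := hL.exists_mem (β := Unit) (fun a b ↦ b () ↔ φ a) (B := fun _ ↦ b) hA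
    (fun _ ↦ hb) h
  convert hB ()
  ext x
  exact (h x).trans (hBφ x).symm

lemma isSetLattice (hL : IsReflecting L) : IsSetLattice L where
  empty_mem := hL.mem_of_forall_mem_iff (fun _ ↦ False) (A := Empty.elim) (Empty.rec _)
    isClosed_empty fun _ ↦ Iff.rfl
  univ_mem := hL.mem_of_forall_mem_iff (fun _ ↦ True) (A := Empty.elim) (Empty.rec _)
    isClosed_univ fun _ ↦ Iff.rfl
  union_mem a ha b hb := hL.mem_of_forall_mem_iff (fun p ↦ p true ∨ p false)
    (A := fun i ↦ bif i then a else b) (Bool.rec hb ha)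
    ((hL.isClosed a ha).union (hL.isClosed b hb)) fun _ ↦ Iff.rfl
  inter_mem a ha b hb := hL.mem_of_forall_mem_iff (fun p ↦ p true ∧ p false)
    (A := fun i ↦ bif i then a else b) (Bool.rec hb ha)
    ((hL.isClosed a ha).inter (hL.isClosed b hb)) fun _ ↦ Iff.rfl

lemma isNormalLattice [NormalSpace X] (hL : IsReflecting L) : IsNormalLattice L where
  toIsSetLattice := hL.isSetLattice
  exists_cover a ha b hb hab := by
    obtain ⟨U, V, hU, hV, haU, hbV, hUV⟩ :=
      normal_separation (hL.isClosed a ha) (hL.isClosed b hb) hab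
    obtain ⟨C, hC, hCab⟩ := hL.exists_mem
      (fun p q ↦ (q true ∨ q false) ∧ ¬ (p true ∧ q true) ∧ ¬ (p false ∧ q false))
      (A := fun i ↦ bif i then a else b) (B := fun i ↦ bif i then Uᶜ else Vᶜ) (Bool.rec hb ha)
      (Bool.rec hV.isClosed_compl hU.isClosed_compl) fun x ↦ by
        refine ⟨?_, fun h ↦ h.2 (haU h.1), fun h ↦ h.2 (hbV h.1)⟩
        by_cases hxU : x ∈ U
        exacts [.inr (hUV.notMem_of_mem_left hxU), .inl hxU]
    exact ⟨C true, hC true, C false, hC false, eq_univ_of_forall fun x ↦ (hCab x).1,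
      disjoint_left.mpr fun x hxa hxC ↦ (hCab x).2.1 ⟨hxa, hxC⟩,
      disjoint_left.mpr fun x hxb hxC ↦ (hCab x).2.2 ⟨hxb, hxC⟩⟩

lemma exists_partition (hL : IsReflecting L) {t : Set X} (ht : t ∈ L) {m n : ℕ}
    {c : Fin m → Set X} (hc : ∀ i, c i ∈ L) {V : Fin n → Set X} (hV : ∀ j, IsClosed (V j))
    (hVt : ⋃ j, V j = t) (hV_disj : Pairwise (Disjoint on V))
    (hVc : ∀ j, ∃ i, Disjoint (V j) (c i)) :
    ∃ W : Fin n → Set X, (∀ j, W j ∈ L) ∧ ⋃ j, W j = t ∧ Pairwise (Disjoint on W) ∧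
      ∀ j, ∃ i, Disjoint (W j) (c i) := by
  choose k hk using hVc
  obtain ⟨W, hW, hWψ⟩ := hL.exists_mem
    (fun (p : Option (Fin m) → Prop) q ↦ ((∃ j, q j) ↔ p none) ∧ (∀ j j', j ≠ j' → q j → ¬ q j') ∧
      ∀ j, q j → ¬ p (some (k j)))
    (A := fun i ↦ i.elim t c) (Option.rec ht hc) hV fun x ↦ ⟨by rw [← mem_iUnion, hVt]; rfl,
      fun j j' hjj' h ↦ disjoint_left.mp (hV_disj hjj') h, fun j h ↦ disjoint_left.mp (hk j) h⟩
  refine ⟨W, hW, ext fun x ↦ mem_iUnion.trans (hWψ x).1,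
    fun j j' hjj' ↦ disjoint_left.mpr fun x ↦ (hWψ x).2.1 j j' hjj', fun j ↦ ⟨k j, ?_⟩⟩
  exact disjoint_left.mpr fun x ↦ (hWψ x).2.2 j

end IsReflecting

end Reflecting

section Lifts

open LUltra Subcontinua

variable {X : Type*} [TopologicalSpace X] {L : Set (Set X)}

/-- The sets of subcontinua contained in, or meeting, a member of `L`. -/
def boxes (L : Set (Set X)) : Set (Set (Subcontinua X)) := inside '' L ∪ hit '' L

/-- `G` satisfies every condition `G ⊆ t` or `G ∩ c ≠ ∅` with `t, c ∈ L`
that `H` satisfies in the Wallman space. -/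
structure IsLift (L : Set (Set X)) (H : Subcontinua (LUltra L)) (G : Subcontinua X) : Prop where
  subset_of_mem : ∀ t ∈ L, H.1 ⊆ hat L t → G.1 ⊆ t
  meets_of_mem : ∀ c ∈ L, (H.1 ∩ hat L c).Nonempty → (G.1 ∩ c).Nonempty

lemma exists_subcontinuum_of_subset_hat [CompactSpace X] [T2Space X] (hL : IsReflecting L)
    (H : Subcontinua (LUltra L)) {t : Set X} (ht : t ∈ L) (hHt : H.1 ⊆ hat L t) {m : ℕ}
    {c : Fin m → Set X} (hc : ∀ i, c i ∈ L) (hHc : ∀ i, (H.1 ∩ hat L (c i)).Nonempty) :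
    ∃ G : Subcontinua X, G.1 ⊆ t ∧ ∀ i, (G.1 ∩ c i).Nonempty := by
  refine (exists_subcontinuum_or_closed_partition (hL.isClosed t ht)
    fun i ↦ hL.isClosed _ (hc i)).resolve_right ?_
  rintro ⟨n, V, hV, hVt, hV_disj, hVc⟩
  obtain ⟨W, hW, hWt, hW_disj, hWc⟩ := hL.exists_partition ht hc hV hVt hV_disj hVc
  have h_image {a : Set X} (ha : a ∈ L) := hL.isNormalLattice.image_toWallman hL.isClosed ha
  have h_cover : hat L t = ⋃ j, hat L (W j) := by
    rw [← h_image ht, ← hWt, image_iUnion]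
    exact iUnion_congr fun j ↦ h_image (hW j)
  obtain ⟨j, hj⟩ := exists_subset_of_isPreconnected_of_subset_iUnion H.2.2.isPreconnected
    H.2.2.nonempty (fun j ↦ isClosed_hat (hW j)) (hHt.trans_eq h_cover)
    fun j k hjk ↦ disjoint_left.mpr fun u huj huk ↦ not_disjoint huj huk (hW_disj hjk)
  obtain ⟨i, hi⟩ := hWc j
  obtain ⟨u, huH, huc⟩ := hHc i
  exact not_disjoint (hj huH) huc hi

lemma exists_isLift [CompactSpace X] [T2Space X] (hL : IsReflecting L)
    (H : Subcontinua (LUltra L)) : ∃ G, IsLift L H G := by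
  have hlat := hL.isSetLattice
  let T := {t // t ∈ L ∧ H.1 ⊆ hat L t}
  let C := {c // c ∈ L ∧ (H.1 ∩ hat L c).Nonempty}
  let Z (i : T × Finset C) : Set (Subcontinua X) := inside i.1.1 ∩ ⋂ c ∈ i.2, hit c.1
  have hZ_closed (i) : IsClosed (Z i) := (isClosed_inside (hL.isClosed _ i.1.2.1)).inter <|
    isClosed_biInter fun c _ ↦ isClosed_hit (hL.isClosed _ c.2.1)
  have hZ_nonempty (i) : (Z i).Nonempty := by
    obtain ⟨G, hGt, hGc⟩ := exists_subcontinuum_of_subset_hat hL H i.1.2.1 i.1.2.2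
      (c := fun k ↦ (i.2.equivFin.symm k).1.1) (fun k ↦ (i.2.equivFin.symm k).1.2.1)
      fun k ↦ (i.2.equivFin.symm k).1.2.2
    refine ⟨G, hGt, mem_iInter₂.mpr fun c hc ↦ ?_⟩
    have h_meets := hGc (i.2.equivFin ⟨c, hc⟩)
    rwa [Equiv.symm_apply_apply] at h_meets
  have hZ_directed : Directed (· ⊇ ·) Z := by
    classical
    rintro ⟨s, E⟩ ⟨t, F⟩
    refine ⟨⟨⟨s.1 ∩ t.1, hlat.inter_mem _ s.2.1 _ t.2.1, fun u hu ↦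
      u.inter_mem _ (s.2.2 hu) _ (t.2.2 hu)⟩, E ∪ F⟩, ?_, ?_⟩
    · exact inter_subset_inter (fun G hG ↦ hG.trans inter_subset_left)
        (biInter_subset_biInter_left fun c hc ↦ Finset.mem_union_left F hc)
    · exact inter_subset_inter (fun G hG ↦ hG.trans inter_subset_right)
        (biInter_subset_biInter_left fun c hc ↦ Finset.mem_union_right E hc)
  let top : T := ⟨univ, hlat.univ_mem, fun u _ ↦ u.univ_mem⟩
  have : Nonempty (T × Finset C) := ⟨top, ∅⟩
  obtain ⟨G, hG⟩ := IsCompact.nonempty_iInter_of_directed_nonempty_isCompact_isClosed Z hZ_directed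
    hZ_nonempty (fun i ↦ (hZ_closed i).isCompact) hZ_closed
  rw [mem_iInter] at hG
  refine ⟨G, fun t ht hHt ↦ (hG ⟨⟨t, ht, hHt⟩, ∅⟩).1, fun c hc hHc ↦ ?_⟩
  exact mem_iInter₂.mp (hG ⟨top, {⟨c, hc, hHc⟩}⟩).2 _ (Finset.mem_singleton_self _)

namespace IsLift

variable {H : Subcontinua (LUltra L)} {G : Subcontinua X}

lemma image_toWallman_eq [CompactSpace X] (hG : IsLift L H G) (hL : IsNormalLattice L)
    (hcl : ∀ a ∈ L, IsClosed a) : hL.toWallman '' G.1 = H.1 := by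
  have := hL.t2Space
  have := hL.compactSpace hcl
  have h_image {a : Set X} (ha : a ∈ L) := hL.image_toWallman hcl ha
  have h_hat {A : Set X} {W : Set (LUltra L)} (hA : A ∈ L) (hWA : hL.toWallman ⁻¹' W ⊆ A) :
      W ⊆ hat L A := by
    rw [← image_preimage_eq W (hL.toWallman_surjective hcl), ← h_image hA]
    exact image_mono hWA
  refine subset_antisymm (image_subset_iff.mpr fun x hxG ↦ ?_) fun u huH ↦ ?_
  · by_contra hxH
    obtain ⟨A, hA, W, -, hHW, hWA, hAx⟩ := hL.isBaseAlong_toWallman H.1 {hL.toWallman x}ᶜ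
      H.2.1.isCompact isOpen_compl_singleton (subset_compl_singleton_iff.mpr hxH)
    exact hAx (hG.subset_of_mem A hA (hHW.trans (h_hat hA hWA)) hxG) rfl
  · by_contra huG
    have hG_closed : IsClosed (hL.toWallman '' G.1) :=
      (G.2.1.isCompact.image (hL.continuous_toWallman hcl)).isClosed
    obtain ⟨A, hA, W, -, huW, hWA, hAG⟩ := hL.isBaseAlong_toWallman {u} (hL.toWallman '' G.1)ᶜ
      isCompact_singleton hG_closed.isOpen_compl (singleton_subset_iff.mpr huG)
    obtain ⟨x, hxG, hxA⟩ := hG.meets_of_mem A hA ⟨u, huH, h_hat hA hWA (huW rfl)⟩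
    exact hAG hxA (mem_image_of_mem _ hxG)

lemma mem_of_mem (hG : IsLift L H G) (hL : IsNormalLattice L) {G' : Subcontinua X}
    (hG' : hL.toWallman '' G'.1 = H.1) {S : Set (Subcontinua X)} (hS : LatGen (boxes L) S)
    (hG'S : G' ∈ S) : G ∈ S := by
  induction hS with
  | base hs =>
    obtain ⟨t, ht, rfl⟩ | ⟨c, hc, rfl⟩ := hs
    · refine hG.subset_of_mem t ht (hG' ▸ image_subset_iff.mpr fun x hx ↦ ?_)
      exact hL.mem_toWallman_of_mem ht (hG'S hx)
    · obtain ⟨x, hx, hxc⟩ := hG'S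
      exact hG.meets_of_mem c hc
        ⟨_, hG' ▸ mem_image_of_mem _ hx, hL.mem_toWallman_of_mem hc hxc⟩
  | union _ _ ihs iht => exact hG'S.imp ihs iht
  | inter _ _ ihs iht => exact ⟨ihs hG'S.1, iht hG'S.2⟩

end IsLift

lemma isSetLattice_latGen_boxes (hL : IsSetLattice L) : IsSetLattice {S | LatGen (boxes L) S} where
  empty_mem := by
    have h_empty : inside (∅ : Set X) = ∅ :=
      eq_empty_of_forall_notMem fun G hG ↦ G.2.2.nonempty.ne_empty (subset_empty_iff.mp hG)
    exact .base (.inl ⟨∅, hL.empty_mem, h_empty⟩)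
  univ_mem := .base (.inl ⟨univ, hL.univ_mem, eq_univ_of_forall fun _ ↦ subset_univ _⟩)
  union_mem _ ha _ hb := .union ha hb
  inter_mem _ ha _ hb := .inter ha hb

lemma isClosed_of_latGen_boxes (hcl : ∀ a ∈ L, IsClosed a) {S : Set (Subcontinua X)}
    (hS : LatGen (boxes L) S) : IsClosed S := by
  induction hS with
  | base hs =>
    obtain ⟨t, ht, rfl⟩ | ⟨c, hc, rfl⟩ := hs
    exacts [isClosed_inside (hcl t ht), isClosed_hit (hcl c hc)]
  | union _ _ ihs iht => exact ihs.union iht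
  | inter _ _ ihs iht => exact ihs.inter iht

lemma isBaseAlong_map_boxes [CompactSpace X] {Y : Type*} [TopologicalSpace Y]
    [CompactSpace Y] [T2Space Y] {f : C(X, Y)} (hL : IsSetLattice L) (hbase : IsBaseAlong f L) :
    IsBaseAlong (map f) {S | LatGen (boxes L) S} := by
  refine (isSetLattice_latGen_boxes hL).isBaseAlong_of_generateFrom rfl ?_
  rintro _ (⟨U, hU, rfl⟩ | ⟨U, hU, rfl⟩) H hH
  · obtain ⟨A, hA, W, hW, hHW, hWA, hAU⟩ := hbase H.1 U H.2.1.isCompact hU hH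
    exact ⟨inside A, .base (.inl ⟨A, hA, rfl⟩), inside W, isOpen_inside hW, hHW,
      fun G hG ↦ (image_subset_iff.mp hG).trans hWA,
      fun G hG ↦ image_subset_iff.mpr (hG.trans hAU)⟩
  · obtain ⟨y, hyH, hyU⟩ := hH
    obtain ⟨A, hA, W, hW, hyW, hWA, hAU⟩ := hbase {y} U isCompact_singleton hU
      (singleton_subset_iff.mpr hyU)
    refine ⟨hit A, .base (.inr ⟨A, hA, rfl⟩), hit W, isOpen_hit hW, ⟨y, hyH, hyW rfl⟩, ?_, ?_⟩
    · rintro G ⟨_, ⟨x, hxG, rfl⟩, hxW⟩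
      exact ⟨x, hxG, hWA hxW⟩
    · rintro G ⟨x, hxG, hxA⟩
      exact ⟨f x, mem_image_of_mem f hxG, hAU hxA⟩

theorem IsReflecting.nonempty_wallman_boxes_homeomorph [CompactSpace X] [T2Space X]
    (hL : IsReflecting L) :
    Nonempty (LUltra {S | LatGen (boxes L) S} ≃ₜ Subcontinua (LUltra L)) := by
  have hN := hL.isNormalLattice
  have := hN.t2Space
  have := hN.compactSpace hL.isClosed
  let f : C(X, LUltra L) := ⟨hN.toWallman, hN.continuous_toWallman hL.isClosed⟩
  refine (isBaseAlong_map_boxes (f := f) hN.toIsSetLattice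
    hN.isBaseAlong_toWallman).nonempty_wallman_homeomorph (continuous_map f) (fun H ↦ ?_)
    (isSetLattice_latGen_boxes hN.toIsSetLattice) (fun _ ↦ isClosed_of_latGen_boxes hL.isClosed)
    fun S hS T hT hST ↦ disjoint_left.mpr ?_
  · obtain ⟨G, hG⟩ := exists_isLift hL H
    exact ⟨G, Subtype.ext (hG.image_toWallman_eq hN hL.isClosed)⟩
  · rintro _ ⟨G, hGS, rfl⟩ ⟨G', hG'T, hGG'⟩
    obtain ⟨E, hE⟩ := exists_isLift hL (map f G)
    exact hST.notMem_of_mem_left (hE.mem_of_mem hN rfl hS hGS)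
      (hE.mem_of_mem hN (congrArg Subtype.val hGG') hT hG'T)

end Lifts

section Definability

open FirstOrder.Language

variable {L : FirstOrder.Language} {N : Type*} [L.Structure N] {A : Set N} {γ : Type*}

lemma definable_iff {p q : (γ → N) → Prop} (hp : A.Definable L {v | p v})
    (hq : A.Definable L {v | q v}) : A.Definable L {v | p v ↔ q v} := by
  simp only [iff_iff_implies_and_implies]
  exact (hp.himp hq).inter (hq.himp hp)

lemma definable_comp_of_finite {ι : Type*} [Finite ι] (ψ : (ι → Prop) → Prop)
    {p : ι → (γ → N) → Prop} (hp : ∀ i, A.Definable L {v | p i v}) :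
    A.Definable L {v | ψ (p · v)} := by
  have h_eq : {v | ψ (p · v)} = ⋃ s : {s // ψ s}, ⋂ i, {v | p i v ↔ s.1 i} := by
    ext v
    simp only [mem_iUnion, mem_iInter, mem_ofPred_eq]
    refine ⟨fun h ↦ ⟨⟨_, h⟩, fun i ↦ Iff.rfl⟩, fun ⟨s, hs⟩ ↦ ?_⟩
    rw [show (p · v) = s.1 from funext fun i ↦ propext (hs i)]
    exact s.2
  rw [h_eq]
  refine definable_iUnion_of_finite fun s ↦ definable_iInter_of_finite fun i ↦
    definable_iff (hp i) ?_
  by_cases h : s.1 i <;> simp [h]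

lemma definable_exists {p : (γ → N) → N → Prop}
    (hp : A.Definable L {v : Option γ → N | p (v ∘ some) (v none)}) :
    A.Definable L {v | ∃ x, p v x} := by
  convert! (hp.preimage_comp (Option.elim · (Sum.inr ()) Sum.inl)).exists_of_finite using 1
  ext v
  exact ⟨fun ⟨x, hx⟩ ↦ ⟨fun _ ↦ x, hx⟩, fun ⟨u, hu⟩ ↦ ⟨u (), hu⟩⟩

lemma definableFun_comp_some {f : (γ → N) → N} (hf : A.DefinableFun L f) :
    A.DefinableFun L fun v : Option γ → N ↦ f (v ∘ some) :=
  hf.preimage_comp (Option.map some)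

lemma exists_mem_of_definable (S : L.ElementarySubstructure N) {β : Type} [Finite β]
    {D : Set (β → N)} (hD : (S : Set N).Definable L D) (hne : D.Nonempty) :
    ∃ v ∈ D, ∀ j, v j ∈ S := by
  obtain ⟨φ, rfl⟩ := definable_iff_exists_formula_sum.mp hD
  have hφ : (φ.iExs β).Realize (S.subtype ∘ id) := Formula.realize_iExs.mpr hne
  rw [S.subtype.map_formula, Formula.realize_iExs] at hφ
  obtain ⟨w, hw⟩ := hφ
  rw [← S.subtype.map_formula, Sum.comp_elim] at hw
  exact ⟨S.subtype ∘ w, hw, fun j ↦ (w j).2⟩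

end Definability

section Hereditary

variable {κ : Cardinal.{1}} {x y : ZFSet.{0}}

lemma heredLt_iff : HeredLt κ x ↔ Cardinal.mk x.toSet < κ ∧ ∀ y ∈ x, HeredLt κ y := by
  rw [HeredLt, ZFSet.mem_wf.fix_eq]
  rfl

lemma HeredLt.mem (hx : HeredLt κ x) (hy : y ∈ x) : HeredLt κ y :=
  (heredLt_iff.mp hx).2 y hy

lemma HeredLt.subset (hx : HeredLt κ x) (hy : y ⊆ x) : HeredLt κ y :=
  heredLt_iff.mpr ⟨(Cardinal.mk_le_mk_of_subset hy).trans_lt (heredLt_iff.mp hx).1,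
    fun _ hz ↦ hx.mem (hy hz)⟩

end Hereditary

section Codes

variable {X c : ZFSet.{0}} {A B : Set X.toSet}

lemma mem_codeSet {p : X.toSet} : p.1 ∈ codeSet X A ↔ p ∈ A := by
  simp [codeSet]

lemma codeSet_subset : codeSet X A ⊆ X := ZFSet.sep_subset

lemma decodeSet_codeSet : decodeSet X (codeSet X A) = A :=
  ext fun _ ↦ mem_codeSet

lemma codeSet_decodeSet (hc : c ⊆ X) : codeSet X (decodeSet X c) = c := by
  ext p
  exact ZFSet.mem_sep.trans ⟨fun ⟨_, _, h⟩ ↦ h, fun h ↦ ⟨hc h, hc h, h⟩⟩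

lemma codeSet_injective : Function.Injective (codeSet X) :=
  Function.LeftInverse.injective fun _ ↦ decodeSet_codeSet

variable [TopologicalSpace X.toSet] {S : Set (Subcontinua X.toSet)}

lemma mem_codeHypFam : c ∈ codeHypFam X S ↔ ∃ G ∈ S, c = codeSet X G.1 := by
  simp only [codeHypFam, ZFSet.mem_sep, ZFSet.mem_powerset, and_iff_right_iff_imp]
  rintro ⟨G, -, rfl⟩
  exact codeSet_subset

lemma codeSet_mem_codeHypFam {G : Subcontinua X.toSet} :
    codeSet X G.1 ∈ codeHypFam X S ↔ G ∈ S := by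
  refine mem_codeHypFam.trans ⟨fun ⟨G', hG', h⟩ ↦ ?_, fun hG ↦ ⟨G, hG, rfl⟩⟩
  rwa [Subtype.ext (codeSet_injective h)]

lemma mem_codeKStarLat : c ∈ codeKStarLat X ↔ ∃ S ∈ KStarLat X, c = codeHypFam X S := by
  simp only [codeKStarLat, ZFSet.mem_sep, ZFSet.mem_powerset, and_iff_right_iff_imp]
  rintro ⟨S, -, rfl⟩
  exact fun _ h ↦ ZFSet.mem_powerset.mpr (ZFSet.mem_powerset.mp (ZFSet.sep_subset h))

end Codes

section Definability

open FirstOrder.Language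

variable {κ : Cardinal.{1}} {γ : Type*} {z : ZFSet.{0}}

lemma definable_mem {A : Set (HKappa κ)} {f g : (γ → HKappa κ) → HKappa κ}
    (hf : A.DefinableFun Language.graph f) (hg : A.DefinableFun Language.graph g) :
    A.Definable Language.graph {v | (f v).1 ∈ (g v).1} := by
  have h_graph : A.Definable Language.graph {v : Fin 2 → HKappa κ | (v 0).1 ∈ (v 1).1} := by
    refine (empty_definable_iff.mpr ⟨Relations.formula₂ Language.adj (.var 0) (.var 1), ?_⟩).mono
      (empty_subset A)
    ext v
    rw [mem_ofPred_eq, mem_ofPred_eq, Formula.realize_rel₂]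
    rfl
  have h_map : A.DefinableMap Language.graph fun v ↦ ![f v, g v] := by
    simp [DefinableMap, hf, hg]
  exact h_graph.preimage_map h_map

lemma definable_exists_mem {A : Set (HKappa κ)} {f : (γ → HKappa κ) → HKappa κ}
    {p : (γ → HKappa κ) → ZFSet → Prop} (hf : A.DefinableFun Language.graph f)
    (hp : A.Definable Language.graph {v : Option γ → HKappa κ | p (v ∘ some) (v none).1}) :
    A.Definable Language.graph {v | ∃ x ∈ (f v).1, p v x} := by
  convert! definable_exists (p := fun v (x : HKappa κ) ↦ x.1 ∈ (f v).1 ∧ p v x.1)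
    ((definable_mem (.proj _) (definableFun_comp_some hf)).inter hp) using 1
  ext v
  exact ⟨fun ⟨x, hx, hp⟩ ↦ ⟨⟨x, HeredLt.mem (f v).2 hx⟩, hx, hp⟩, fun ⟨x, hx⟩ ↦ ⟨x.1, hx⟩⟩

lemma definable_forall_mem {A : Set (HKappa κ)} {f : (γ → HKappa κ) → HKappa κ}
    {p : (γ → HKappa κ) → ZFSet → Prop} (hf : A.DefinableFun Language.graph f)
    (hp : A.Definable Language.graph {v : Option γ → HKappa κ | p (v ∘ some) (v none).1}) :
    A.Definable Language.graph {v | ∀ x ∈ (f v).1, p v x} := by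
  convert! (definable_exists_mem (p := fun v x ↦ ¬ p v x) hf hp.compl).compl using 1
  ext v
  simp

variable {M : Language.graph.ElementarySubstructure (HKappa κ)}

lemma MemOf.definableFun (hz : MemOf κ M z) :
    (M : Set (HKappa κ)).DefinableFun Language.graph fun _ : γ → HKappa κ ↦ ⟨z, hz.1⟩ :=
  Language.graph.definableFun_const γ hz.2

end Definability

section Reflection

open FirstOrder.Language

variable {X : ZFSet.{0}} {κ : Cardinal.{1}}
  {M : Language.graph.ElementarySubstructure (HKappa κ)} {γ : Type*}
  {f g : (γ → HKappa κ) → HKappa κ}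

lemma definable_decodeSet_subset (hX : MemOf κ M X)
    (hf : (M : Set (HKappa κ)).DefinableFun Language.graph f)
    (hg : (M : Set (HKappa κ)).DefinableFun Language.graph g) :
    (M : Set (HKappa κ)).Definable Language.graph
      {v | decodeSet X (f v).1 ⊆ decodeSet X (g v).1} := by
  convert! definable_forall_mem (p := fun v x ↦ x ∈ (f v).1 → x ∈ (g v).1) hX.definableFun
    ((definable_mem (.proj _) (definableFun_comp_some hf)).himp
      (definable_mem (.proj _) (definableFun_comp_some hg))) using 1
  ext v
  exact ⟨fun h p hp ↦ @h ⟨p, hp⟩, fun h p ↦ h p.1 p.2⟩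

lemma definable_decodeSet_inter_nonempty (hX : MemOf κ M X)
    (hf : (M : Set (HKappa κ)).DefinableFun Language.graph f)
    (hg : (M : Set (HKappa κ)).DefinableFun Language.graph g) :
    (M : Set (HKappa κ)).Definable Language.graph
      {v | (decodeSet X (f v).1 ∩ decodeSet X (g v).1).Nonempty} := by
  convert! definable_exists_mem (p := fun v x ↦ x ∈ (f v).1 ∧ x ∈ (g v).1) hX.definableFun
    ((definable_mem (.proj _) (definableFun_comp_some hf)).inter
      (definable_mem (.proj _) (definableFun_comp_some hg))) using 1
  ext v
  exact ⟨fun ⟨p, hp⟩ ↦ ⟨p.1, p.2, hp⟩, fun ⟨p, hpX, hp⟩ ↦ ⟨⟨p, hpX⟩, hp⟩⟩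

variable [TopologicalSpace X.toSet]

lemma isClosed_decodeSet_iff {c : ZFSet.{0}} :
    IsClosed (decodeSet X c) ↔ ∃ o ∈ opensZ X, ∀ p ∈ X, p ∈ o ↔ p ∉ c := by
  rw [← isOpen_compl_iff]
  constructor
  · refine fun h ↦ ⟨codeSet X (decodeSet X c)ᶜ, ZFSet.mem_sep.mpr
      ⟨ZFSet.mem_powerset.mpr codeSet_subset, by rwa [decodeSet_codeSet]⟩, fun p hp ↦ ?_⟩
    exact mem_codeSet (p := ⟨p, hp⟩)
  · rintro ⟨o, ho, h⟩
    rw [show (decodeSet X c)ᶜ = decodeSet X o from ext fun p ↦ (h p.1 p.2).symm]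
    exact (ZFSet.mem_sep.mp ho).2

lemma definable_isClosed_decodeSet (hX : MemOf κ M X) (hO : MemOf κ M (opensZ X))
    (hf : (M : Set (HKappa κ)).DefinableFun Language.graph f) :
    (M : Set (HKappa κ)).Definable Language.graph {v | IsClosed (decodeSet X (f v).1)} := by
  simp only [isClosed_decodeSet_iff]
  refine definable_exists_mem (p := fun v o ↦ ∀ p ∈ X, p ∈ o ↔ p ∉ (f v).1) hO.definableFun
    (definable_forall_mem (p := fun v p ↦ p ∈ (v none).1 ↔ p ∉ (f (v ∘ some)).1)
      hX.definableFun ?_)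
  exact definable_iff (definable_mem (.proj _) (.proj _))
    (definable_mem (.proj _) (definableFun_comp_some (definableFun_comp_some hf))).compl

lemma exists_mem_Lfam_of_definable (hX : MemOf κ M X) (hO : MemOf κ M (opensZ X))
    {β : Type} [Finite β] {P : (β → Set X.toSet) → Prop}
    (hP : (M : Set (HKappa κ)).Definable Language.graph
      {v : β → HKappa κ | P fun j ↦ decodeSet X (v j).1})
    {B : β → Set X.toSet} (hB : ∀ j, IsClosed (B j)) (hPB : P B) :
    ∃ B' : β → Set X.toSet, (∀ j, B' j ∈ Lfam X κ M) ∧ P B' := by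
  have h_codes : (M : Set (HKappa κ)).Definable Language.graph
      (⋂ j : β, {v | (∀ p ∈ (v j).1, p ∈ X) ∧ IsClosed (decodeSet X (v j).1)}) :=
    definable_iInter_of_finite fun j ↦
      (definable_forall_mem (p := fun _ p ↦ p ∈ X) (.proj _)
        (definable_mem (.proj _) hX.definableFun)).inter
      (definable_isClosed_decodeSet hX hO (.proj _))
  obtain ⟨b, ⟨hb, hPb⟩, hbM⟩ := exists_mem_of_definable M (h_codes.inter hP)
    ⟨fun j ↦ ⟨codeSet X (B j), HeredLt.subset hX.1 codeSet_subset⟩, by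
      simpa [decodeSet_codeSet, hB, hPB] using fun j p hp ↦ codeSet_subset hp⟩
  simp only [mem_iInter, mem_ofPred_eq] at hb
  refine ⟨_, fun j ↦ ⟨(hb j).2, ?_⟩, hPb⟩
  rw [codeSet_decodeSet (hb j).1]
  exact ⟨(b j).2, hbM j⟩

lemma MemOf.isReflecting_Lfam (hX : MemOf κ M X) (hO : MemOf κ M (opensZ X)) :
    IsReflecting (Lfam X κ M) where
  isClosed _ hA := hA.1
  exists_mem {α β} _ _ ψ A B hA hB h := by
    refine exists_mem_Lfam_of_definable (P := fun B' ↦ ∀ x, ψ (x ∈ A ·) (x ∈ B' ·)) hX hO ?_ hB h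
    convert! definable_forall_mem (f := fun _ : β → HKappa κ ↦ ⟨X, hX.1⟩)
      (p := fun v p ↦ ψ (fun i ↦ p ∈ codeSet X (A i)) (fun j ↦ p ∈ (v j).1)) hX.definableFun
      (definable_comp_of_finite (ι := α ⊕ β)
        (p := Sum.elim (fun i (v : Option β → HKappa κ) ↦ (v none).1 ∈ codeSet X (A i))
          fun j v ↦ (v none).1 ∈ (v (some j)).1)
        (fun s ↦ ψ (s ∘ Sum.inl) (s ∘ Sum.inr)) ?_) using 1
    · ext v
      simp only [mem_ofPred_eq, decodeSet]
      refine ⟨fun h p hp ↦ ?_, fun h p ↦ ?_⟩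
      · simpa only [← mem_codeSet] using h ⟨p, hp⟩
      · simpa only [← mem_codeSet] using h p.1 p.2
    · rintro (i | j)
      · exact definable_mem (.proj _) (hA i).2.definableFun
      · exact definable_mem (.proj _) (.proj _)

end Reflection

section GeneratedLattices

variable {α α' : Type*} {B : Set (Set α)} {B' : Set (Set α')} {S : Set α}

lemma LatGen.preimage {f : α' → α} (hS : LatGen B S) (hB : ∀ b ∈ B, LatGen B' (f ⁻¹' b)) :
    LatGen B' (f ⁻¹' S) := by
  induction hS with
  | base hb => exact hB _ hb
  | union _ _ ihs iht => exact ihs.union iht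
  | inter _ _ ihs iht => exact ihs.inter iht

lemma LatGen.union_biUnion {ι : Type*} {b : ι → Set α} (hS : LatGen B S) (F : Finset ι)
    (hb : ∀ i ∈ F, b i ∈ B) : LatGen B (S ∪ ⋃ i ∈ F, b i) := by
  classical
  induction F using Finset.induction_on with
  | empty => simpa using hS
  | insert i F _ ih =>
    rw [Finset.set_biUnion_insert, union_left_comm]
    exact (LatGen.base (hb i (F.mem_insert_self i))).union
      (ih fun j hj ↦ hb j (Finset.mem_insert_of_mem hj))

-- The lattice generated by the coordinate propositions is the lattice of monotone terms in them.
lemma LatGen.exists_term (hS : LatGen B S) :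
    ∃ (β : Type) (_ : Finite β) (b : β → Set α) (Ψ : Set (β → Prop)), (∀ i, b i ∈ B) ∧
      LatGen (range fun i ↦ {v : β → Prop | v i}) Ψ ∧ S = (fun x i ↦ x ∈ b i) ⁻¹' Ψ := by
  have h_comp {β β' : Type} (e : β → β') {Ψ : Set (β → Prop)}
      (h : LatGen (range fun i ↦ {v : β → Prop | v i}) Ψ) :
      LatGen (range fun i ↦ {v : β' → Prop | v i}) ((· ∘ e) ⁻¹' Ψ) :=
    h.preimage (forall_mem_range.mpr fun i ↦ .base ⟨e i, rfl⟩)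
  induction hS with
  | @base s hs => exact ⟨Unit, inferInstance, fun _ ↦ s, _, fun _ ↦ hs, .base ⟨(), rfl⟩, rfl⟩
  | union _ _ ihs iht =>
    obtain ⟨β, _, b, Ψ, hb, hΨ, rfl⟩ := ihs
    obtain ⟨β', _, b', Ψ', hb', hΨ', rfl⟩ := iht
    exact ⟨β ⊕ β', inferInstance, Sum.elim b b', _, Sum.forall.mpr ⟨hb, hb'⟩,
      (h_comp Sum.inl hΨ).union (h_comp Sum.inr hΨ'), rfl⟩
  | inter _ _ ihs iht =>
    obtain ⟨β, _, b, Ψ, hb, hΨ, rfl⟩ := ihs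
    obtain ⟨β', _, b', Ψ', hb', hΨ', rfl⟩ := iht
    exact ⟨β ⊕ β', inferInstance, Sum.elim b b', _, Sum.forall.mpr ⟨hb, hb'⟩,
      (h_comp Sum.inl hΨ).inter (h_comp Sum.inr hΨ'), rfl⟩

end GeneratedLattices

section StarSets

open Subcontinua

variable {X : Type*} [TopologicalSpace X]

lemma starSet_eq_hit_union (F : Finset (Set X)) :
    starSet F = hit (⋂₀ (F : Set (Set X))) ∪ ⋃ s ∈ F, inside s := by
  ext G
  simp only [starSet, hit, inside, not_and_or, not_forall, not_not, mem_union, mem_iUnion,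
    mem_ofPred_eq, ← nonempty_iff_ne_empty, ← ne_eq]

lemma starSet_singleton (a : Set X) : starSet {a} = hit a := by
  have h_inside : inside a ⊆ hit a := fun G hG ↦ G.2.2.nonempty.mono (subset_inter subset_rfl hG)
  simpa [starSet_eq_hit_union] using h_inside

lemma starSet_pair_empty [DecidableEq (Set X)] (a : Set X) : starSet {a, ∅} = inside a := by
  ext G
  simp [starSet_eq_hit_union, hit, inside, G.2.2.nonempty.ne_empty]

lemma latGen_starSet_iff {S : Set (Subcontinua X)} :
    LatGen {T | ∃ F : Finset (Set X), (∀ s ∈ F, IsClosed s) ∧ T = starSet F} S ↔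
      LatGen (boxes {A | IsClosed A}) S := by
  classical
  refine ⟨fun hS ↦ hS.preimage (f := id) ?_, fun hS ↦ hS.preimage (f := id) ?_⟩
  · rintro _ ⟨F, hF, rfl⟩
    rw [preimage_id, starSet_eq_hit_union]
    exact (LatGen.base (.inr ⟨_, isClosed_sInter hF, rfl⟩)).union_biUnion F
      fun s hs ↦ .inl ⟨s, hF s hs, rfl⟩
  · rintro _ (⟨a, ha, rfl⟩ | ⟨a, ha, rfl⟩)
    · exact .base ⟨{a, ∅}, by simpa using ha, (starSet_pair_empty a).symm⟩
    · exact .base ⟨{a}, by simpa using ha, (starSet_singleton a).symm⟩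

end StarSets

section BoxRelations

variable {X : Type*}

/-- Membership of a subcontinuum `G` in a box over `a`: the box `inside a` for `true`,
the box `hit a` for `false`. -/
def BoxRel (G a : Set X) : Bool → Prop
  | true => G ⊆ a
  | false => (G ∩ a).Nonempty

variable [TopologicalSpace X] {F : Set (Set X)} {S : Set (Subcontinua X)}

lemma setOf_boxRel_mem_boxes {a : Set X} (ha : a ∈ F) :
    ∀ c, {G : Subcontinua X | BoxRel G.1 a c} ∈ boxes F
  | true => .inl ⟨a, ha, rfl⟩
  | false => .inr ⟨a, ha, rfl⟩

lemma exists_boxRel_of_mem_boxes (hS : S ∈ boxes F) :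
    ∃ c, ∃ a ∈ F, S = {G | BoxRel G.1 a c} := by
  obtain ⟨a, ha, rfl⟩ | ⟨a, ha, rfl⟩ := hS
  exacts [⟨true, a, ha, rfl⟩, ⟨false, a, ha, rfl⟩]

lemma latGen_boxes_iff :
    LatGen (boxes F) S ↔ ∃ (β : Type) (_ : Finite β) (c : β → Bool) (Ψ : Set (β → Prop)),
      LatGen (range fun i ↦ {v : β → Prop | v i}) Ψ ∧
      ∃ a : β → Set X, (∀ i, a i ∈ F) ∧ S = {G | (fun i ↦ BoxRel G.1 (a i) (c i)) ∈ Ψ} := by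
  constructor
  · intro hS
    obtain ⟨β, hβ, b, Ψ, hb, hΨ, rfl⟩ := hS.exists_term
    choose c a ha hba using fun i ↦ exists_boxRel_of_mem_boxes (hb i)
    obtain rfl : b = fun i ↦ {G | BoxRel G.1 (a i) (c i)} := funext hba
    exact ⟨β, hβ, c, Ψ, hΨ, a, ha, rfl⟩
  · rintro ⟨β, -, c, Ψ, hΨ, a, ha, rfl⟩
    exact hΨ.preimage (forall_mem_range.mpr fun i ↦ .base (setOf_boxRel_mem_boxes (ha i) (c i)))

end BoxRelations

section ReflectingKStarLat

open FirstOrder.Language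

variable {X : ZFSet.{0}} {κ : Cardinal.{1}}
  {M : Language.graph.ElementarySubstructure (HKappa κ)} {γ : Type*}

lemma definable_boxRel {f g : (γ → HKappa κ) → HKappa κ} (hX : MemOf κ M X)
    (hf : (M : Set (HKappa κ)).DefinableFun Language.graph f)
    (hg : (M : Set (HKappa κ)).DefinableFun Language.graph g) : ∀ c,
    (M : Set (HKappa κ)).Definable Language.graph
      {v | BoxRel (decodeSet X (f v).1) (decodeSet X (g v).1) c}
  | true => definable_decodeSet_subset hX hf hg
  | false => definable_decodeSet_inter_nonempty hX hf hg

variable [TopologicalSpace X.toSet]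

lemma univ_mem_KStarLat : univ ∈ KStarLat X :=
  latGen_starSet_iff.mpr
    (.base (.inl ⟨univ, isClosed_univ, eq_univ_of_forall fun _ ↦ subset_univ _⟩))

lemma forall_mem_mem_codeKStarLat_iff {p : ZFSet.{0} → Prop} :
    (∀ k ∈ codeKStarLat X, ∀ g ∈ k, p g) ↔ ∀ G : Subcontinua X.toSet, p (codeSet X G.1) := by
  constructor
  · exact fun h G ↦ h _ (mem_codeKStarLat.mpr ⟨univ, univ_mem_KStarLat, rfl⟩) _
      (codeSet_mem_codeHypFam.mpr (mem_univ G))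
  · rintro h _ hk _ hg
    obtain ⟨S, -, rfl⟩ := mem_codeKStarLat.mp hk
    obtain ⟨G, -, rfl⟩ := mem_codeHypFam.mp hg
    exact h G

lemma definable_forall_mem_iff_boxRel {β : Type} [Finite β] {f : (γ → HKappa κ) → HKappa κ}
    {a : β → (γ → HKappa κ) → HKappa κ} (hX : MemOf κ M X) (hK : MemOf κ M (codeKStarLat X))
    (c : β → Bool) (Ψ : Set (β → Prop))
    (hf : (M : Set (HKappa κ)).DefinableFun Language.graph f)
    (ha : ∀ i, (M : Set (HKappa κ)).DefinableFun Language.graph (a i)) :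
    (M : Set (HKappa κ)).Definable Language.graph {v | ∀ G : Subcontinua X.toSet,
      codeSet X G.1 ∈ (f v).1 ↔ (fun i ↦ BoxRel G.1 (decodeSet X (a i v).1) (c i)) ∈ Ψ} := by
  convert! definable_forall_mem (f := fun _ : γ → HKappa κ ↦ ⟨codeKStarLat X, hK.1⟩)
    (p := fun v k ↦ ∀ g ∈ k, g ∈ (f v).1 ↔
      (fun i ↦ BoxRel (decodeSet X g) (decodeSet X (a i v).1) (c i)) ∈ Ψ) hK.definableFun
    (definable_forall_mem (f := fun v : Option γ → HKappa κ ↦ v none)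
      (p := fun v g ↦ g ∈ (f (v ∘ some)).1 ↔
        (fun i ↦ BoxRel (decodeSet X g) (decodeSet X (a i (v ∘ some)).1) (c i)) ∈ Ψ) (.proj _)
      (definable_iff
        (definable_mem (.proj _) (definableFun_comp_some (definableFun_comp_some hf)))
        (definable_comp_of_finite (· ∈ Ψ) fun i ↦ definable_boxRel hX (.proj _)
          (definableFun_comp_some (definableFun_comp_some (ha i))) (c i)))) using 1
  ext v
  simp only [mem_ofPred_eq, forall_mem_mem_codeKStarLat_iff, decodeSet_codeSet]

lemma latGen_boxes_Lfam_of_mem_Kfam (hX : MemOf κ M X) (hO : MemOf κ M (opensZ X))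
    (hK : MemOf κ M (codeKStarLat X)) {S : Set (Subcontinua X.toSet)} (hS : S ∈ Kfam X κ M) :
    LatGen (boxes (Lfam X κ M)) S := by
  obtain ⟨β, _, c, Ψ, hΨ, a, ha, hSa⟩ := latGen_boxes_iff.mp (latGen_starSet_iff.mp hS.1)
  obtain ⟨a', ha', hSa'⟩ := exists_mem_Lfam_of_definable hX hO
    (P := fun a ↦ ∀ G : Subcontinua X.toSet,
      codeSet X G.1 ∈ codeHypFam X S ↔ (fun i ↦ BoxRel G.1 (a i) (c i)) ∈ Ψ)
    (definable_forall_mem_iff_boxRel hX hK c Ψ hS.2.definableFun fun i ↦ .proj _) ha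
    fun G ↦ by rw [codeSet_mem_codeHypFam, hSa, mem_ofPred_eq]
  simp only [codeSet_mem_codeHypFam] at hSa'
  exact latGen_boxes_iff.mpr ⟨β, ‹_›, c, Ψ, hΨ, a', ha', ext hSa'⟩

lemma mem_Kfam_of_latGen_boxes_Lfam (hX : MemOf κ M X) (hK : MemOf κ M (codeKStarLat X))
    {S : Set (Subcontinua X.toSet)} (hS : LatGen (boxes (Lfam X κ M)) S) : S ∈ Kfam X κ M := by
  have hS_mem : S ∈ KStarLat X := latGen_starSet_iff.mpr <| hS.preimage (f := id) <| by
    rintro _ (⟨a, ha, rfl⟩ | ⟨a, ha, rfl⟩)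
    exacts [.base (.inl ⟨a, ha.1, rfl⟩), .base (.inr ⟨a, ha.1, rfl⟩)]
  obtain ⟨β, _, c, Ψ, -, a, ha, hSa⟩ := latGen_boxes_iff.mp hS
  have h_code : codeHypFam X S ∈ codeKStarLat X := mem_codeKStarLat.mpr ⟨S, hS_mem, rfl⟩
  obtain ⟨k, ⟨hkK, hk⟩, hkM⟩ := exists_mem_of_definable M (β := Unit)
    ((definable_mem (.proj _ (i := ())) hK.definableFun).inter
      (definable_forall_mem_iff_boxRel hX hK c Ψ (.proj _ (i := ()))
        fun i ↦ (ha i).2.definableFun))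
    ⟨fun _ ↦ ⟨codeHypFam X S, hK.1.mem h_code⟩, h_code, fun G ↦ by
      simp only [codeSet_mem_codeHypFam, hSa, decodeSet_codeSet, mem_ofPred_eq]⟩
  obtain ⟨S', -, hkS'⟩ := mem_codeKStarLat.mp hkK
  obtain rfl : S' = S := ext fun G ↦ by
    rw [← codeSet_mem_codeHypFam, ← hkS', hk G, hSa]
    simp only [decodeSet_codeSet, mem_ofPred_eq]
  exact ⟨hS_mem, hkS' ▸ ⟨(k ()).2, hkM ()⟩⟩

lemma Kfam_eq_latGen_boxes_Lfam (hX : MemOf κ M X) (hO : MemOf κ M (opensZ X))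
    (hK : MemOf κ M (codeKStarLat X)) : Kfam X κ M = {S | LatGen (boxes (Lfam X κ M)) S} :=
  ext fun _ ↦ ⟨latGen_boxes_Lfam_of_mem_Kfam hX hO hK, mem_Kfam_of_latGen_boxes_Lfam hX hK⟩

end ReflectingKStarLat

theorem wallman_K_homeomorph_hyperspace_wallman_L_general
    (X : ZFSet.{0}) [TopologicalSpace ↥X.toSet] [CompactSpace ↥X.toSet] [T2Space ↥X.toSet]
    (κ : Cardinal.{1}) (M : FirstOrder.Language.graph.ElementarySubstructure (HKappa κ))
    (hXM : MemOf κ M X) (htopM : MemOf κ M (opensZ X)) (hKM : MemOf κ M (codeKStarLat X)) :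
    Nonempty (LUltra (Kfam X κ M) ≃ₜ Subcontinua (LUltra (Lfam X κ M))) := by
  rw [Kfam_eq_latGen_boxes_Lfam hXM htopM hKM]
  exact (hXM.isReflecting_Lfam htopM).nonempty_wallman_boxes_homeomorph

/-- For a continuum `X`, a countable elementary submodel `M ≺ H(κ)` with
`X ∈ M`, `L = 2^X ∩ M`, the lattice `K* ∈ M` generated by the sets `F*` representing
`C(X)`, and `K = K* ∩ M`, the Wallman space `wK` is homeomorphic to `C(wL)`, the
hyperspace of subcontinua of the metric continuum `wL`. -/
theorem wallman_K_homeomorph_hyperspace_wallman_L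
    (X : ZFSet.{0}) [TopologicalSpace ↥X.toSet] [CompactSpace ↥X.toSet]
    [T2Space ↥X.toSet] [ConnectedSpace ↥X.toSet]
    (κ : Cardinal.{1}) (hreg : κ.IsRegular) (hbig : HeredLt κ X.powerset.powerset)
    (M : FirstOrder.Language.graph.ElementarySubstructure (HKappa κ))
    (hMcount : Countable M) (hXM : MemOf κ M X) (htopM : MemOf κ M (opensZ X))
    (hKM : MemOf κ M (codeKStarLat X)) :
    Nonempty (LUltra (Kfam X κ M) ≃ₜ Subcontinua (LUltra (Lfam X κ M))) :=
  wallman_K_homeomorph_hyperspace_wallman_L_general X κ M hXM htopM hKM
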